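/- The compute nodes asymptotically reach consensus on a convex combination of their initial values: there exist v ∈ ℝ and weights θ_1,…,θ_n ≥ 0 with Σ_{j=1}^n θ_j = 1 such that x̂_i(t) → v as t → ∞ for every compute node i, and v = Σ_{j=1}^n θ_j x_j(0). -/

import Mathlib

open Matrix Filter BigOperators
open scoped Classical

noncomputable section

/-- A directed graph on `Fin n` with `m` directed edges, edge `e` going from
`src e` to `tgt e`. -/
structure DGraph (n m : ℕ) where
  src : Fin m → Fin n
  tgt : Fin m → Fin n

/-- Hypotheses of the random-delay consensus model: no self-loops, distinct edges,
`P` row stochastic respecting `G` (hence with positive diagonal), and `G` strongly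
connected. -/
structure DGraph.Valid {n m : ℕ} (G : DGraph n m) (P : Matrix (Fin n) (Fin n) ℝ) : Prop where
  noSelf : ∀ e, G.src e ≠ G.tgt e
  edgeInj : ∀ e e', G.src e = G.src e' → G.tgt e = G.tgt e' → e = e'
  nonneg : ∀ i j, 0 ≤ P i j
  rowSum : ∀ i, ∑ j, P i j = 1
  support : ∀ i j, 0 < P i j ↔ i = j ∨ ∃ e, G.src e = j ∧ G.tgt e = i
  connected : ∀ i j : Fin n,
    Relation.ReflTransGen (fun a b => ∃ e, G.src e = a ∧ G.tgt e = b) i j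

/-- Delay nodes: for every directed edge `e : Fin m`, every chain-length index
`ℓ : Fin B` (the parallel chain modelling a delay of `ℓ.1 + 1`), and every
position `k : Fin B` with `k ≤ ℓ` along that chain.  There are `m·B(B+1)/2`
of them in total. -/
def DelayNode (m B : ℕ) : Type :=
  {q : Fin m × Fin B × Fin B // q.2.2.1 ≤ q.2.1.1}

instance (m B : ℕ) : Fintype (DelayNode m B) := by
  unfold DelayNode; infer_instance

instance (m B : ℕ) : DecidableEq (DelayNode m B) := by
  unfold DelayNode; infer_instance

namespace RandomDelay

variable {n m B : ℕ}

/-- The edge a delay node belongs to. -/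
def edgeOf (d : DelayNode m B) : Fin m := d.val.1
/-- The chain (of length `lenIdx d + 1`) a delay node belongs to. -/
def lenIdx (d : DelayNode m B) : ℕ := d.val.2.1.1
/-- The (0-indexed) position of a delay node along its chain. -/
def posIdx (d : DelayNode m B) : ℕ := d.val.2.2.1
/-- `d` is the terminal node of its chain. -/
def isTerminal (d : DelayNode m B) : Prop := d.val.2.2 = d.val.2.1

/-- The fixed block-diagonal forward-shift matrix `C`: a message at position `k`
of a chain moves to position `k+1` of the same chain. -/
def Cmat (m B : ℕ) : Matrix (DelayNode m B) (DelayNode m B) ℝ := fun d d' =>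
  if d.val.1 = d'.val.1 ∧ d.val.2.1 = d'.val.2.1 ∧ posIdx d = posIdx d' + 1 then 1 else 0

/-- The fixed delivery matrix `J`: `J i d = 1` iff `d` is the terminal node of a
chain on an edge pointing into compute node `i`. -/
def Jmat (G : DGraph n m) (B : ℕ) : Matrix (Fin n) (DelayNode m B) ℝ := fun i d =>
  if G.tgt (edgeOf d) = i ∧ isTerminal d then 1 else 0

/-- `L(t)`: zero-delay deliveries.  `L t i j = 1` iff at iteration `t` node `j`
sends its message on the edge `j → i` with zero delay. -/
def Lmat (G : DGraph n m) (del : ℕ → Fin m → Fin (B + 1)) (t : ℕ) :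
    Matrix (Fin n) (Fin n) ℝ := fun i j =>
  if ∃ e, G.src e = j ∧ G.tgt e = i ∧ (del t e).1 = 0 then 1 else 0

/-- `R(t)`: routing of messages into delay chains.  `R t d j = 1` iff `d` is the
first node of the chain of length `ℓ+1` on an edge out of `j`, and at iteration
`t` node `j`'s message on that edge is assigned delay `ℓ+1`. -/
def Rmat (G : DGraph n m) (del : ℕ → Fin m → Fin (B + 1)) (t : ℕ) :
    Matrix (DelayNode m B) (Fin n) ℝ := fun d j =>
  if G.src (edgeOf d) = j ∧ posIdx d = 0 ∧ (del t (edgeOf d)).1 = lenIdx d + 1 then 1 else 0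

/-- Occupancy vector: `φ 0 = 0` and `φ t = R(t)·1 + C·φ(t-1)`. -/
def phi (G : DGraph n m) (del : ℕ → Fin m → Fin (B + 1)) : ℕ → DelayNode m B → ℝ
  | 0 => fun _ => 0
  | t + 1 => Rmat G del (t + 1) *ᵥ (fun _ => 1) + Cmat m B *ᵥ phi G del t

/-- `ŵ_{ij}(t)`: the number of delay chains from `j` to `i` whose terminal node is
occupied at time `t - 1`, i.e. the number of delayed messages `i` receives from `j`
at iteration `t`. -/
def wgt (G : DGraph n m) (del : ℕ → Fin m → Fin (B + 1)) (t : ℕ) (i j : Fin n) : ℕ :=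
  (Finset.univ.filter (fun d : DelayNode m B =>
    G.tgt (edgeOf d) = i ∧ G.src (edgeOf d) = j ∧ isTerminal d ∧
      phi G del (t - 1) d = 1)).card

/-- Total number of messages (delayed plus undelayed) that `i` receives from `j`
at iteration `t`, as a real number. -/
def denom (G : DGraph n m) (del : ℕ → Fin m → Fin (B + 1)) (t : ℕ) (i j : Fin n) : ℝ :=
  (wgt G del t i j : ℝ) + Lmat G del t i j

/-- `P̄[L(t)]`: each entry `1` of `L(t)` (a zero-delay message from `j` to `i`) is
replaced with the weight `P i j / (ŵ_{ij} + L_{ij}(t))`. -/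
def PLmat (G : DGraph n m) (P : Matrix (Fin n) (Fin n) ℝ)
    (del : ℕ → Fin m → Fin (B + 1)) (t : ℕ) : Matrix (Fin n) (Fin n) ℝ := fun i j =>
  Lmat G del t i j * (P i j / denom G del t i j)

/-- `P̄[φ(t-1)]`: each entry `1` of `J·diag(φ(t-1))` (a delayed message from `j`
delivered to `i`) is replaced with the weight `P i j / (ŵ_{ij} + L_{ij}(t))`. -/
def PFmat (G : DGraph n m) (P : Matrix (Fin n) (Fin n) ℝ)
    (del : ℕ → Fin m → Fin (B + 1)) (t : ℕ) : Matrix (Fin n) (DelayNode m B) ℝ := fun i d =>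
  Jmat G B i d * phi G del (t - 1) d *
    (P i (G.src (edgeOf d)) / denom G del t i (G.src (edgeOf d)))

/-- Top-left block `P̂₁₁(t) = I − diag(P̄[φ(t−1)]·1_b + P̄[L(t)]·1_n) + P̄[L(t)]`. -/
def P11 (G : DGraph n m) (P : Matrix (Fin n) (Fin n) ℝ)
    (del : ℕ → Fin m → Fin (B + 1)) (t : ℕ) : Matrix (Fin n) (Fin n) ℝ :=
  1 - Matrix.diagonal (fun i => (∑ d, PFmat G P del t i d) + (∑ j, PLmat G P del t i j))
    + PLmat G P del t

/-- The delayed transition matrix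
`P̂(t) = [[P̂₁₁(t), P̄[φ(t−1)]], [R(t), C]]`. -/
def Phat (G : DGraph n m) (P : Matrix (Fin n) (Fin n) ℝ)
    (del : ℕ → Fin m → Fin (B + 1)) (t : ℕ) :
    Matrix (Fin n ⊕ DelayNode m B) (Fin n ⊕ DelayNode m B) ℝ :=
  Matrix.fromBlocks (P11 G P del t) (PFmat G P del t) (Rmat G del t) (Cmat m B)

/-- The state: `x̂(0) = (x(0), 0_b)` and `x̂(t) = P̂(t)·x̂(t−1)`. -/
def xhat (G : DGraph n m) (P : Matrix (Fin n) (Fin n) ℝ)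
    (del : ℕ → Fin m → Fin (B + 1)) (x0 : Fin n → ℝ) :
    ℕ → (Fin n ⊕ DelayNode m B) → ℝ
  | 0 => Sum.elim x0 (fun _ => 0)
  | t + 1 => Phat G P del (t + 1) *ᵥ xhat G P del x0 t

/-- The product `M(t) = P̂(t)·P̂(t−1)⋯P̂(1)` (with `M(0) = I`). -/
def Mprod (G : DGraph n m) (P : Matrix (Fin n) (Fin n) ℝ)
    (del : ℕ → Fin m → Fin (B + 1)) :
    ℕ → Matrix (Fin n ⊕ DelayNode m B) (Fin n ⊕ DelayNode m B) ℝ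
  | 0 => 1
  | t + 1 => Phat G P del (t + 1) * Mprod G P del t

/-- Top-left `n × n` block of `M(t)`. -/
def M1 (G : DGraph n m) (P : Matrix (Fin n) (Fin n) ℝ)
    (del : ℕ → Fin m → Fin (B + 1)) (t : ℕ) : Matrix (Fin n) (Fin n) ℝ :=
  fun i j => Mprod G P del t (Sum.inl i) (Sum.inl j)

/-- Bottom-left `b × n` block of `M(t)`. -/
def M2 (G : DGraph n m) (P : Matrix (Fin n) (Fin n) ℝ)
    (del : ℕ → Fin m → Fin (B + 1)) (t : ℕ) : Matrix (DelayNode m B) (Fin n) ℝ :=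
  fun d j => Mprod G P del t (Sum.inr d) (Sum.inl j)

/-- A node is occupied at time `t` if it is a compute node, or a delay node `d`
with `φ_d(t) = 1`. -/
def occupied (G : DGraph n m) (del : ℕ → Fin m → Fin (B + 1)) (t : ℕ) :
    (Fin n ⊕ DelayNode m B) → Prop
  | Sum.inl _ => True
  | Sum.inr d => phi G del t d = 1

/-- Maximum of the state over the occupied nodes at time `t`. -/
def occMax (G : DGraph n m) (P : Matrix (Fin n) (Fin n) ℝ)
    (del : ℕ → Fin m → Fin (B + 1)) (x0 : Fin n → ℝ) (t : ℕ) : ℝ :=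
  sSup {y : ℝ | ∃ v, occupied G del t v ∧ xhat G P del x0 t v = y}

/-- Minimum of the state over the occupied nodes at time `t`. -/
def occMin (G : DGraph n m) (P : Matrix (Fin n) (Fin n) ℝ)
    (del : ℕ → Fin m → Fin (B + 1)) (x0 : Fin n → ℝ) (t : ℕ) : ℝ :=
  sInf {y : ℝ | ∃ v, occupied G del t v ∧ xhat G P del x0 t v = y}

end RandomDelay

end

section WindowAveraging

variable {V : Type*}

/-- `M` bounds `y` on the time window `[t - B, t]`. -/
def WindowBound (B : ℕ) (y : ℕ → V → ℝ) (t : ℕ) (M : ℝ) : Prop :=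
  ∀ s, s ≤ t → t ≤ s + B → ∀ j, y s j ≤ M

/-- Every node keeps a share `ε` of its distance to an upper bound of the recent past, and along
each edge of `E` such a share is passed on with a delay of at most `B`. -/
structure DelayedAveraging (B : ℕ) (ε : ℝ) (E : V → V → Prop) (y : ℕ → V → ℝ) : Prop where
  pos : 0 < ε
  le_one : ε ≤ 1
  self : ∀ t M i c, 0 ≤ c → WindowBound B y t M → y t i ≤ M - c → y (t + 1) i ≤ M - ε * c
  edge : ∀ t i j, E j i → ∃ k ≤ B, ∀ M c, 0 ≤ c → WindowBound B y (t + k) M → y t j ≤ M - c →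
    y (t + k + 1) i ≤ M - ε * c

namespace DelayedAveraging

variable {B : ℕ} {ε : ℝ} {E : V → V → Prop} {y : ℕ → V → ℝ}

theorem windowBound_add (h : DelayedAveraging B ε E y) {t : ℕ} {M : ℝ}
    (hU : WindowBound B y t M) (r : ℕ) : WindowBound B y (t + r) M := by
  induction r with
  | zero => exact hU
  | succ r ih =>
    intro s hs hs' j
    rcases Nat.lt_or_ge s (t + r + 1) with hlt | hge
    · exact ih s (by omega) (by omega) j
    · obtain rfl : s = t + r + 1 := by omega
      have hj := ih (t + r) le_rfl (by omega) j
      simpa using h.self (t + r) M j 0 le_rfl ih (by simpa using hj)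

theorem le_of_windowBound (h : DelayedAveraging B ε E y) {t s : ℕ} {M : ℝ}
    (hU : WindowBound B y t M) (hs : t ≤ s) (i : V) : y s i ≤ M := by
  obtain ⟨r, rfl⟩ := Nat.exists_eq_add_of_le hs
  exact h.windowBound_add hU r _ le_rfl (by omega) i

theorem self_pow (h : DelayedAveraging B ε E y) {t : ℕ} {M c : ℝ} {i : V}
    (hc : 0 ≤ c) (hU : WindowBound B y t M) (hi : y t i ≤ M - c) (r : ℕ) :
    y (t + r) i ≤ M - ε ^ r * c := by
  have hε := h.pos
  induction r with
  | zero => simpa using hi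
  | succ r ih =>
    rw [pow_succ', mul_assoc]
    exact h.self (t + r) M i (ε ^ r * c) (by positivity) (h.windowBound_add hU r) ih

theorem edge_pow (h : DelayedAveraging B ε E y) {t : ℕ} {M c : ℝ} {i j : V}
    (hc : 0 ≤ c) (hU : WindowBound B y t M) (hE : E j i) (hj : y t j ≤ M - c) :
    y (t + (B + 1)) i ≤ M - ε ^ (B + 1) * c := by
  have hε := h.pos
  obtain ⟨k, hk, hedge⟩ := h.edge t i j hE
  have hi := hedge M c hc (h.windowBound_add hU k) hj
  have hpow := h.self_pow (by positivity) (h.windowBound_add hU (k + 1)) hi (B - k)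
  have htime : t + (k + 1) + (B - k) = t + (B + 1) := by omega
  rw [htime, ← mul_assoc, ← pow_succ] at hpow
  have hle : ε ^ (B + 1) ≤ ε ^ (B - k + 1) :=
    pow_le_pow_of_le_one hε.le h.le_one (by omega)
  linarith [mul_le_mul_of_nonneg_right hle hc]

theorem exists_reach (h : DelayedAveraging B ε E y) {i j : V} (hji : Relation.ReflTransGen E j i) :
    ∃ r : ℕ, ∀ t M c, 0 ≤ c → WindowBound B y t M → y t j ≤ M - c →
      y (t + r) i ≤ M - ε ^ r * c := by
  have hε := h.pos
  induction hji with
  | refl => exact ⟨0, fun t M c _ _ hj => by simpa using hj⟩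
  | tail _ hE ih =>
    obtain ⟨r, hr⟩ := ih
    refine ⟨r + (B + 1), fun t M c hc hU hj => ?_⟩
    have := h.edge_pow (by positivity) (h.windowBound_add hU r) hE (hr t M c hc hU hj)
    rwa [← mul_assoc, ← pow_add, add_comm (B + 1) r, add_assoc t] at this

theorem exists_uniform_reach [Finite V] (h : DelayedAveraging B ε E y)
    (hconn : ∀ i j, Relation.ReflTransGen E i j) :
    ∃ N : ℕ, ∀ r ≥ N, ∀ t M c j i, 0 ≤ c → WindowBound B y t M → y t j ≤ M - c →
      y (t + r) i ≤ M - ε ^ r * c := by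
  have hε := h.pos
  choose f hf using fun p : V × V => h.exists_reach (hconn p.1 p.2)
  obtain ⟨N, hN⟩ := (Set.finite_range f).bddAbove
  refine ⟨N, fun r hr t M c j i hc hU hj => ?_⟩
  have hle : f (j, i) ≤ r := (hN ⟨(j, i), rfl⟩).trans hr
  have := h.self_pow (by positivity) (h.windowBound_add hU _) (hf (j, i) t M c hc hU hj)
    (r - f (j, i))
  rwa [← mul_assoc, ← pow_add, add_assoc t, Nat.sub_add_cancel hle, Nat.add_sub_cancel' hle] at this

theorem exists_windowBound_contraction [Finite V] (h : DelayedAveraging B ε E y)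
    (hconn : ∀ i j, Relation.ReflTransGen E i j) :
    ∃ N : ℕ, ∀ r ≥ N, ∀ t M c j, 0 ≤ c → WindowBound B y t M → y t j ≤ M - c →
      WindowBound B y (t + r) (M - ε ^ r * c) := by
  obtain ⟨N, hN⟩ := h.exists_uniform_reach hconn
  refine ⟨N + B, fun r hr t M c j hc hU hj s hs hs' i => ?_⟩
  obtain ⟨q, rfl⟩ : ∃ q, s = t + q := ⟨s - t, by omega⟩
  have hle : ε ^ r ≤ ε ^ q := pow_le_pow_of_le_one h.pos.le h.le_one (by omega)
  linarith [hN q (by omega) t M c j i hc hU hj, mul_le_mul_of_nonneg_right hle hc]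

/-- If both `y` and `-y` are averaged with bounded delays along a strongly connected relation, the
oscillation of `y` contracts geometrically. -/
theorem exists_window_oscillation [Finite V] [Nonempty V] (h : DelayedAveraging B ε E y)
    (h' : DelayedAveraging B ε E (-y)) (hconn : ∀ i j, Relation.ReflTransGen E i j) {δ : ℝ}
    (hδ : 0 < δ) :
    ∃ (t : ℕ) (l u : ℝ), u - l < δ ∧ WindowBound B y t u ∧ WindowBound B (-y) t (-l) := by
  obtain ⟨j⟩ := ‹Nonempty V›
  obtain ⟨N, hN⟩ := h.exists_windowBound_contraction hconn
  obtain ⟨N', hN'⟩ := h'.exists_windowBound_contraction hconn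
  set r := max N N'
  obtain ⟨u₀, hu₀⟩ := (Set.finite_range (y 0)).bddAbove
  obtain ⟨l₀, hl₀⟩ := (Set.finite_range (y 0)).bddBelow
  have hcontr : ∀ k : ℕ, ∃ l u : ℝ, u - l = (1 - ε ^ r) ^ k * (u₀ - l₀) ∧
      WindowBound B y (k * r) u ∧ WindowBound B (-y) (k * r) (-l) := by
    intro k
    induction k with
    | zero =>
      refine ⟨l₀, u₀, by simp, fun s hs _ i => ?_, fun s hs _ i => ?_⟩
      · obtain rfl : s = 0 := by omega
        exact hu₀ ⟨i, rfl⟩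
      · obtain rfl : s = 0 := by omega
        exact neg_le_neg (hl₀ ⟨i, rfl⟩)
    | succ k ih =>
      obtain ⟨l, u, hlu, hu, hl⟩ := ih
      have hju := hu _ le_rfl (by omega) j
      have hjl : l ≤ y (k * r) j := neg_le_neg_iff.mp (hl _ le_rfl (by omega) j)
      refine ⟨l + ε ^ r * (y (k * r) j - l), u - ε ^ r * (u - y (k * r) j), ?_, ?_, ?_⟩
      · rw [pow_succ', mul_assoc, ← hlu]
        ring
      · rw [Nat.succ_mul]
        exact hN r (le_max_left _ _) _ u _ j (by linarith) hu (by linarith)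
      · rw [Nat.succ_mul, neg_add']
        exact hN' r (le_max_right _ _) _ (-l) _ j (by linarith) hl
          (by simp only [Pi.neg_apply]; linarith)
  have hη : 0 < ε ^ r := pow_pos h.pos r
  obtain ⟨k, hk⟩ : ∃ k : ℕ, (1 - ε ^ r) ^ k * (u₀ - l₀) < δ := by
    have hη1 : ε ^ r ≤ 1 := pow_le_one₀ h.pos.le h.le_one
    have htend : Tendsto (fun k : ℕ => (1 - ε ^ r) ^ k * (u₀ - l₀)) atTop (nhds 0) := by
      simpa using (tendsto_pow_atTop_nhds_zero_of_lt_one (r := 1 - ε ^ r) (by linarith)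
        (by linarith)).mul_const (u₀ - l₀)
    exact (htend.eventually_lt_const hδ).exists
  obtain ⟨l, u, hlu, hu, hl⟩ := hcontr k
  exact ⟨_, l, u, hlu ▸ hk, hu, hl⟩

theorem exists_tendsto [Finite V] [Nonempty V] (h : DelayedAveraging B ε E y)
    (h' : DelayedAveraging B ε E (-y)) (hconn : ∀ i j, Relation.ReflTransGen E i j) :
    ∃ v : ℝ, ∀ i, Tendsto (fun t => y t i) atTop (nhds v) := by
  have hclose : ∀ δ > 0, ∃ T, ∀ s ≥ T, ∀ s' ≥ T, ∀ i i', dist (y s i) (y s' i') < δ := by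
    intro δ hδ
    obtain ⟨T, l, u, hlu, hu, hl⟩ := exists_window_oscillation h h' hconn hδ
    refine ⟨T, fun s hs s' hs' i i' => ?_⟩
    have h₁ := h.le_of_windowBound hu hs i
    have h₂ := h.le_of_windowBound hu hs' i'
    have h₃ : l ≤ y s i := neg_le_neg_iff.mp (h'.le_of_windowBound hl hs i)
    have h₄ : l ≤ y s' i' := neg_le_neg_iff.mp (h'.le_of_windowBound hl hs' i')
    rw [Real.dist_eq, abs_lt]
    constructor <;> linarith
  obtain ⟨j⟩ := ‹Nonempty V›
  obtain ⟨v, hv⟩ := cauchySeq_tendsto_of_complete (u := fun t => y t j) <|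
    Metric.cauchySeq_iff.mpr fun δ hδ =>
      (hclose δ hδ).imp fun T hT s hs s' hs' => hT s hs s' hs' j j
  refine ⟨v, fun i => Metric.tendsto_atTop.mpr fun δ hδ => ?_⟩
  obtain ⟨T, hT⟩ := hclose (δ / 2) (half_pos hδ)
  refine ⟨T, fun s hs => ?_⟩
  have hlim : dist (y s i) v ≤ δ / 2 :=
    le_of_tendsto (tendsto_const_nhds.dist hv)
      (eventually_atTop.mpr ⟨T, fun s' hs' => (hT s hs s' hs' i j).le⟩)
  linarith

end DelayedAveraging

end WindowAveraging

/-- A number between two values of `x` is a convex combination of the values of `x`. -/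
theorem exists_convex_weights_of_mem_Icc {ι : Type*} [Fintype ι] {x : ι → ℝ} {a b : ι} {v : ℝ}
    (hv : v ∈ Set.Icc (x a) (x b)) :
    ∃ θ : ι → ℝ, (∀ j, 0 ≤ θ j) ∧ ∑ j, θ j = 1 ∧ v = ∑ j, θ j * x j := by
  rw [← segment_eq_Icc (hv.1.trans hv.2)] at hv
  obtain ⟨α, β, hα, hβ, hαβ, rfl⟩ := hv
  refine ⟨Pi.single a α + Pi.single b β, fun j => ?_, ?_, ?_⟩
  · have hsingle : (0 : ι → ℝ) ≤ Pi.single a α + Pi.single b β :=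
      add_nonneg (Pi.single_nonneg.mpr hα) (Pi.single_nonneg.mpr hβ)
    exact hsingle j
  · simp [Finset.sum_add_distrib, hαβ]
  · simp [add_mul, Finset.sum_add_distrib, Pi.single_apply]

/-- A weighted average lies below an upper bound `M` of the averaged values by at least the share
contributed by any one of them. -/
theorem sum_mul_le_sub_of_le {ι : Type*} [Fintype ι] {w z : ι → ℝ} {M c ε : ℝ} {k : ι}
    (hw : ∀ i, 0 ≤ w i) (hsum : ∑ i, w i = 1) (hz : ∀ i, w i ≠ 0 → z i ≤ M)
    (hc : 0 ≤ c) (hk : z k ≤ M - c) (hε : ε ≤ w k) : ∑ i, w i * z i ≤ M - ε * c := by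
  have hterm : ∀ i, 0 ≤ w i * (M - z i) := fun i => by
    by_cases h0 : w i = 0
    · simp [h0]
    · exact mul_nonneg (hw i) (sub_nonneg.mpr (hz i h0))
  have hle := Finset.single_le_sum (fun i _ => hterm i) (Finset.mem_univ k)
  have heq : ∑ i, w i * (M - z i) = M - ∑ i, w i * z i := by
    simp [mul_sub, Finset.sum_sub_distrib, ← Finset.sum_mul, hsum]
  have hkc : w k * c ≤ w k * (M - z k) := mul_le_mul_of_nonneg_left (by linarith) (hw k)
  linarith [mul_le_mul_of_nonneg_right hε hc]

namespace RandomDelay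

variable {n m B : ℕ} {G : DGraph n m} {P : Matrix (Fin n) (Fin n) ℝ}
  {del : ℕ → Fin m → Fin (B + 1)} {x0 : Fin n → ℝ}

/-- The node preceding `d` on its chain (`d` itself at the head of the chain). -/
def pred (d : DelayNode m B) : DelayNode m B :=
  ⟨(d.val.1, d.val.2.1, ⟨d.val.2.2.1 - 1, by omega⟩), le_trans (Nat.sub_le _ _) d.property⟩

theorem Cmat_mulVec_of_posIdx_eq_zero (z : DelayNode m B → ℝ) {d : DelayNode m B}
    (hd : posIdx d = 0) : (Cmat m B *ᵥ z) d = 0 := by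
  refine Finset.sum_eq_zero fun d' _ => ?_
  simp [Cmat, hd]

theorem Cmat_mulVec_of_posIdx_ne_zero (z : DelayNode m B → ℝ) {d : DelayNode m B}
    (hd : posIdx d ≠ 0) : (Cmat m B *ᵥ z) d = z (pred d) := by
  have hrow : ∀ d', Cmat m B d d' = if d' = pred d then 1 else 0 := by
    intro d'
    unfold Cmat
    congr 1
    refine propext ⟨?_, ?_⟩
    · rintro ⟨h₁, h₂, h₃⟩
      refine Subtype.ext (Prod.ext h₁.symm (Prod.ext h₂.symm (Fin.ext ?_)))
      simp only [posIdx] at h₃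
      simp [pred, h₃]
    · rintro rfl
      refine ⟨rfl, rfl, ?_⟩
      simp only [posIdx] at hd
      simp only [posIdx, pred]
      omega
  simp [Matrix.mulVec, dotProduct, hrow]

theorem Rmat_mulVec (t : ℕ) (z : Fin n → ℝ) (d : DelayNode m B) :
    (Rmat G del t *ᵥ z) d =
      if posIdx d = 0 ∧ (del t (edgeOf d)).1 = lenIdx d + 1 then z (G.src (edgeOf d)) else 0 := by
  simp only [Matrix.mulVec, dotProduct, Rmat, ite_mul, one_mul, zero_mul]
  split_ifs with h <;> simp [h]

theorem phi_succ (t : ℕ) (d : DelayNode m B) :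
    phi G del (t + 1) d = if posIdx d = 0 then
      (if (del (t + 1) (edgeOf d)).1 = lenIdx d + 1 then 1 else 0) else phi G del t (pred d) := by
  simp only [phi, Pi.add_apply, Rmat_mulVec]
  split_ifs with h <;>
    simp_all [Cmat_mulVec_of_posIdx_eq_zero, Cmat_mulVec_of_posIdx_ne_zero]

theorem xhat_succ_inr (t : ℕ) (d : DelayNode m B) :
    xhat G P del x0 (t + 1) (Sum.inr d) = if posIdx d = 0 then
      (if (del (t + 1) (edgeOf d)).1 = lenIdx d + 1 then
        xhat G P del x0 t (Sum.inl (G.src (edgeOf d))) else 0)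
      else xhat G P del x0 t (Sum.inr (pred d)) := by
  simp only [xhat, Phat, Matrix.fromBlocks_mulVec, Sum.elim_inr, Pi.add_apply, Rmat_mulVec]
  split_ifs with h <;>
    simp_all [Cmat_mulVec_of_posIdx_eq_zero, Cmat_mulVec_of_posIdx_ne_zero]

theorem posIdx_pred (d : DelayNode m B) : posIdx (pred d) = posIdx d - 1 := rfl

theorem phi_eq_zero_or_one (t : ℕ) (d : DelayNode m B) :
    phi G del t d = 0 ∨ phi G del t d = 1 := by
  induction t generalizing d with
  | zero => exact Or.inl rfl
  | succ t ih =>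
    rw [phi_succ]
    split_ifs <;> simp [ih]

/-- A message sent into the chain of `d` reaches `d` after `posIdx d` further steps. -/
theorem occupied_of_sent {t : ℕ} {d : DelayNode m B}
    (hd : (del (t + 1) (edgeOf d)).1 = lenIdx d + 1) :
    phi G del (t + posIdx d + 1) d = 1 ∧
      xhat G P del x0 (t + posIdx d + 1) (Sum.inr d) =
        xhat G P del x0 t (Sum.inl (G.src (edgeOf d))) := by
  induction hp : posIdx d generalizing d with
  | zero => simp [phi_succ, xhat_succ_inr, hp, hd]
  | succ p ih =>
    have := ih (d := pred d) hd (by rw [posIdx_pred, hp]; rfl)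
    rw [phi_succ, xhat_succ_inr, if_neg (by omega), if_neg (by omega)]
    exact this

/-- The message held by an occupied delay node was sent at most `B` steps ago. -/
theorem exists_sent_of_phi_eq_one {t : ℕ} {d : DelayNode m B} (hd : phi G del t d = 1) :
    ∃ s, t = s + posIdx d + 1 ∧ (del (s + 1) (edgeOf d)).1 = lenIdx d + 1 := by
  induction t generalizing d with
  | zero => simp [phi] at hd
  | succ t ih =>
    rw [phi_succ] at hd
    split_ifs at hd with h₁ h₂
    · exact ⟨t, by omega, h₂⟩
    · simp at hd
    · obtain ⟨s, hs, hs'⟩ := ih hd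
      rw [posIdx_pred] at hs
      exact ⟨s, by omega, hs'⟩

theorem posIdx_lt (d : DelayNode m B) : posIdx d < B := d.val.2.2.2

theorem xhat_inr_le_of_windowBound {t : ℕ} {M : ℝ} {d : DelayNode m B}
    (hU : WindowBound B (fun s j => xhat G P del x0 s (Sum.inl j)) t M)
    (hd : phi G del t d = 1) : xhat G P del x0 t (Sum.inr d) ≤ M := by
  obtain ⟨s, rfl, hs⟩ := exists_sent_of_phi_eq_one hd
  rw [(occupied_of_sent hs).2]
  exact hU s (by omega) (by have := posIdx_lt d; omega) _

theorem Lmat_nonneg (t : ℕ) (i j : Fin n) : 0 ≤ Lmat G del t i j := by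
  unfold Lmat
  split_ifs <;> simp

theorem denom_nonneg (t : ℕ) (i j : Fin n) : 0 ≤ denom G del t i j :=
  add_nonneg (Nat.cast_nonneg _) (Lmat_nonneg t i j)

theorem denom_le (t : ℕ) (i j : Fin n) :
    denom G del t i j ≤ Fintype.card (DelayNode m B) + 1 := by
  refine add_le_add (Nat.cast_le.mpr (Finset.card_le_univ _)) ?_
  unfold Lmat
  split_ifs <;> simp

theorem PLmat_nonneg (hV : G.Valid P) (t : ℕ) (i j : Fin n) : 0 ≤ PLmat G P del t i j :=
  mul_nonneg (Lmat_nonneg t i j) (div_nonneg (hV.nonneg i j) (denom_nonneg t i j))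

theorem PFmat_nonneg (hV : G.Valid P) (t : ℕ) (i : Fin n) (d : DelayNode m B) :
    0 ≤ PFmat G P del t i d := by
  refine mul_nonneg (mul_nonneg ?_ ?_) (div_nonneg (hV.nonneg _ _) (denom_nonneg _ _ _))
  · unfold Jmat
    split_ifs <;> simp
  · rcases phi_eq_zero_or_one (G := G) (del := del) (t - 1) d with h | h <;> simp [h]

theorem sum_PFmat (t : ℕ) (i : Fin n) :
    ∑ d, PFmat G P del t i d =
      ∑ j, (wgt G del t i j : ℝ) * (P i j / denom G del t i j) := by
  have hrow : ∀ d, PFmat G P del t i d = ∑ j, if G.tgt (edgeOf d) = i ∧ G.src (edgeOf d) = j ∧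
      isTerminal d ∧ phi G del (t - 1) d = 1 then P i j / denom G del t i j else 0 := by
    intro d
    rw [Finset.sum_eq_single (G.src (edgeOf d)) (fun j _ hj => if_neg fun h => hj h.2.1.symm)
      (by simp)]
    rcases phi_eq_zero_or_one (G := G) (del := del) (t - 1) d with h | h <;>
      simp [PFmat, Jmat, h]
  simp only [hrow]
  rw [Finset.sum_comm]
  refine Finset.sum_congr rfl fun j _ => ?_
  rw [← Finset.sum_filter, Finset.sum_const, nsmul_eq_mul]
  rfl

theorem denom_self (hV : G.Valid P) (t : ℕ) (i : Fin n) : denom G del t i i = 0 := by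
  have hw : wgt G del t i i = 0 := by
    refine Finset.card_eq_zero.mpr (Finset.filter_eq_empty_iff.mpr fun d _ h => ?_)
    exact hV.noSelf _ (h.2.1.trans h.1.symm)
  have hL : Lmat G del t i i = 0 :=
    if_neg fun ⟨e, h₁, h₂, _⟩ => hV.noSelf e (h₁.trans h₂.symm)
  simp [denom, hw, hL]

theorem sum_PFmat_add_sum_PLmat_le (hV : G.Valid P) (t : ℕ) (i : Fin n) :
    ∑ d, PFmat G P del t i d + ∑ j, PLmat G P del t i j ≤ 1 - P i i := by
  rw [sum_PFmat, ← Finset.sum_add_distrib, ← hV.rowSum i,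
    ← Finset.sum_erase_eq_sub (Finset.mem_univ i)]
  simp only [PLmat, ← add_mul]
  change ∑ j, denom G del t i j * (P i j / denom G del t i j) ≤ _
  rw [← Finset.sum_erase Finset.univ (a := i) (by simp [denom_self hV])]
  refine Finset.sum_le_sum fun j _ => ?_
  rw [mul_div_left_comm]
  exact mul_le_of_le_one_right (hV.nonneg i j) (div_self_le_one _)

theorem le_P11_self (hV : G.Valid P) (t : ℕ) (i : Fin n) : P i i ≤ P11 G P del t i i := by
  have h₁ := sum_PFmat_add_sum_PLmat_le (del := del) hV t i
  have h₂ := PLmat_nonneg (del := del) hV t i i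
  simp only [P11, Matrix.add_apply, Matrix.sub_apply, Matrix.one_apply_eq,
    Matrix.diagonal_apply_eq]
  linarith

theorem P11_of_ne (t : ℕ) {i j : Fin n} (hij : i ≠ j) :
    P11 G P del t i j = PLmat G P del t i j := by
  simp [P11, hij]

theorem Phat_inl_nonneg (hV : G.Valid P) (t : ℕ) (i : Fin n) (u : Fin n ⊕ DelayNode m B) :
    0 ≤ Phat G P del t (Sum.inl i) u := by
  rcases u with j | d
  · by_cases hij : i = j
    · subst hij
      exact (hV.nonneg i i).trans (le_P11_self hV t i)
    · exact (PLmat_nonneg hV t i j).trans_eq (P11_of_ne t hij).symm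
  · exact PFmat_nonneg hV t i d

theorem sum_Phat_inl (t : ℕ) (i : Fin n) : ∑ u, Phat G P del t (Sum.inl i) u = 1 := by
  simp [Fintype.sum_sum_type, Phat, P11, Finset.sum_add_distrib, Matrix.one_apply,
    Matrix.diagonal_apply]
  ring

/-- If the row of compute node `i` gives weight at least `ε` to a node whose state is at least `c`
below a bound on the recent past, then `i` ends up at least `ε * c` below that bound. -/
theorem xhat_succ_inl_le (hV : G.Valid P) {t : ℕ} {M c ε : ℝ} {i : Fin n}
    {u : Fin n ⊕ DelayNode m B}
    (hU : WindowBound B (fun s j => xhat G P del x0 s (Sum.inl j)) t M) (hc : 0 ≤ c)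
    (hu : xhat G P del x0 t u ≤ M - c) (hε : ε ≤ Phat G P del (t + 1) (Sum.inl i) u) :
    xhat G P del x0 (t + 1) (Sum.inl i) ≤ M - ε * c := by
  refine sum_mul_le_sub_of_le (Phat_inl_nonneg hV (t + 1) i) (sum_Phat_inl (t + 1) i) ?_ hc hu hε
  rintro (j | d) hne
  · exact hU t le_rfl (by omega) j
  · refine xhat_inr_le_of_windowBound hU ((phi_eq_zero_or_one t d).resolve_left fun h => hne ?_)
    simp [Phat, PFmat, h]

theorem xhat_neg (t : ℕ) : xhat G P del (-x0) t = -xhat G P del x0 t := by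
  induction t with
  | zero => funext u; rcases u with j | d <;> simp [xhat]
  | succ t ih => simp only [xhat, ih, Matrix.mulVec_neg]

/-- A uniform positive lower bound on the weights given to received messages. -/
theorem exists_weight_lower_bound (P : Matrix (Fin n) (Fin n) ℝ) {K : ℝ} (hK : 1 ≤ K) :
    ∃ ε : ℝ, 0 < ε ∧ ε ≤ 1 ∧ ∀ i j, 0 < P i j → ε ≤ P i j / K := by
  have hK0 : 0 < K := by linarith
  have hfin : ∀ p ∈ (Set.univ : Set (Fin n × Fin n)),
      ∀ᶠ ε : ℝ in nhdsWithin 0 (Set.Ioi 0), 0 < P p.1 p.2 → ε ≤ P p.1 p.2 / K := by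
    intro p _
    by_cases hp : 0 < P p.1 p.2
    · filter_upwards [Ioc_mem_nhdsGT (div_pos hp hK0)] with ε hε _ using hε.2
    · exact Eventually.of_forall fun _ h => absurd h hp
  obtain ⟨ε, hε, hε1⟩ := (((Set.finite_univ.eventually_all).mpr hfin).and
    (Ioc_mem_nhdsGT (zero_lt_one' ℝ))).exists
  exact ⟨ε, hε1.1, hε1.2, fun i j => hε (i, j) (Set.mem_univ _)⟩

theorem div_denom_lower_bound {ε : ℝ} {t : ℕ} {i j : Fin n} (hP : 0 ≤ P i j)
    (hden : 0 < denom G del t i j)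
    (hε : ε ≤ P i j / ((Fintype.card (DelayNode m B) : ℝ) + 1)) :
    ε ≤ P i j / denom G del t i j :=
  hε.trans (div_le_div_of_nonneg_left hP hden (denom_le t i j))

theorem delayedAveraging_xhat (hV : G.Valid P) {ε : ℝ} (hε0 : 0 < ε) (hε1 : ε ≤ 1)
    (hε : ∀ i j, 0 < P i j → ε ≤ P i j / ((Fintype.card (DelayNode m B) : ℝ) + 1))
    (del : ℕ → Fin m → Fin (B + 1)) (x0 : Fin n → ℝ) :
    DelayedAveraging B ε (fun a b => ∃ e, G.src e = a ∧ G.tgt e = b)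
      (fun t i => xhat G P del x0 t (Sum.inl i)) where
  pos := hε0
  le_one := hε1
  self t M i c hc hU hi := by
    refine xhat_succ_inl_le hV hU hc hi (le_trans ?_ (le_P11_self hV (t + 1) i))
    have hpos : 0 < P i i := (hV.support i i).mpr (Or.inl rfl)
    exact (hε i i hpos).trans (div_le_self hpos.le (by simp))
  edge := by
    rintro t _ _ ⟨e, rfl, rfl⟩
    have hpos : 0 < P (G.tgt e) (G.src e) := (hV.support _ _).mpr (Or.inr ⟨e, rfl, rfl⟩)
    have hbound := hε _ _ hpos
    refine ⟨(del (t + 1) e).1, by omega, fun M c hc hU hj => ?_⟩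
    rcases hk : (del (t + 1) e).1 with _ | k
    · rw [hk] at hU
      refine xhat_succ_inl_le hV hU hc hj ?_
      have hL : Lmat G del (t + 1) (G.tgt e) (G.src e) = 1 := if_pos ⟨e, rfl, rfl, hk⟩
      change ε ≤ P11 G P del (t + 1) (G.tgt e) (G.src e)
      rw [P11_of_ne _ (hV.noSelf e).symm, PLmat, hL, one_mul]
      refine div_denom_lower_bound hpos.le ?_ hbound
      rw [denom, hL]
      positivity
    · rw [hk] at hU
      have hkB : k < B := by omega
      let d : DelayNode m B := ⟨(e, ⟨k, hkB⟩, ⟨k, hkB⟩), le_rfl⟩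
      have hsent := occupied_of_sent (G := G) (P := P) (x0 := x0) (d := d) hk
      have hphi : phi G del (t + (k + 1)) d = 1 := hsent.1
      refine xhat_succ_inl_le (u := Sum.inr d) hV hU hc (hsent.2.trans_le hj) ?_
      have hw : 0 < wgt G del (t + (k + 1) + 1) (G.tgt e) (G.src e) :=
        Finset.card_pos.mpr ⟨d, Finset.mem_filter.mpr ⟨Finset.mem_univ d, rfl, rfl, rfl, hphi⟩⟩
      have hPF : PFmat G P del (t + (k + 1) + 1) (G.tgt e) d =
          P (G.tgt e) (G.src e) / denom G del (t + (k + 1) + 1) (G.tgt e) (G.src e) := by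
        simp [PFmat, Jmat, hphi, edgeOf, isTerminal, d]
      change ε ≤ PFmat G P del (t + (k + 1) + 1) (G.tgt e) d
      rw [hPF]
      exact div_denom_lower_bound hpos.le
        (add_pos_of_pos_of_nonneg (Nat.cast_pos.mpr hw) (Lmat_nonneg _ _ _)) hbound

end RandomDelay

open RandomDelay Filter in
/-- **Consensus on a convex combination of the initial values.**  For every
realization of the delays, there are a value `v` and convex weights `θ` such that
the state of every compute node converges to `v = ∑ j, θ j * x0 j`. -/
theorem random_delay_consensus_convex_combination
    {n m B : ℕ} (hn : 0 < n) (hB : 1 ≤ B)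
    (G : DGraph n m) (P : Matrix (Fin n) (Fin n) ℝ) (hV : G.Valid P)
    (del : ℕ → Fin m → Fin (B + 1)) (x0 : Fin n → ℝ) :
    ∃ (v : ℝ) (θ : Fin n → ℝ),
      (∀ j, 0 ≤ θ j) ∧ (∑ j, θ j = 1) ∧
      (∀ i : Fin n,
        Tendsto (fun t => xhat G P del x0 t (Sum.inl i)) atTop (nhds v)) ∧
      v = ∑ j, θ j * x0 j := by
  have : Nonempty (Fin n) := ⟨⟨0, hn⟩⟩
  obtain ⟨ε, hε0, hε1, hε⟩ := exists_weight_lower_bound P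
    (K := (Fintype.card (DelayNode m B) : ℝ) + 1) (by simp)
  have h := delayedAveraging_xhat hV hε0 hε1 hε del x0
  have h' := delayedAveraging_xhat hV hε0 hε1 hε del (-x0)
  simp only [xhat_neg] at h'
  obtain ⟨v, hv⟩ := h.exists_tendsto h' hV.connected
  obtain ⟨a, ha⟩ := Finite.exists_min x0
  obtain ⟨b, hb⟩ := Finite.exists_max x0
  have hU : WindowBound B (fun t i => xhat G P del x0 t (Sum.inl i)) 0 (x0 b) := by
    intro s hs _ j
    obtain rfl : s = 0 := by omega
    exact hb j
  have hL : WindowBound B (fun t i => (-xhat G P del x0 t) (Sum.inl i)) 0 (-x0 a) := by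
    intro s hs _ j
    obtain rfl : s = 0 := by omega
    exact neg_le_neg (ha j)
  have hmem : v ∈ Set.Icc (x0 a) (x0 b) :=
    ⟨ge_of_tendsto' (hv a) fun t =>
        neg_le_neg_iff.mp (h'.le_of_windowBound hL (Nat.zero_le t) a),
      le_of_tendsto' (hv a) fun t => h.le_of_windowBound hU (Nat.zero_le t) a⟩
  obtain ⟨θ, hθ0, hθ1, hθv⟩ := exists_convex_weights_of_mem_Icc hmem
  exact ⟨v, θ, hθ0, hθ1, hv, hθv⟩
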